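/- arXiv:2202.12878 — 3 statements merged into one kernel-verified Lean document; each statement's English description precedes it below -/
import Mathlib

section
/- Let (F, q_F) be an object of _{(W_i)}Set^{(𝒱I)ᵒᵖ} and let (V,x) be a central element of F; for each i ∈ I let δ_i : V → W_i be an injective linear map with x = δ_i^*φ_i. Then for all injective linear maps ε_k : U → W_k and ε_j : U → W_j such that ε_k^*φ_k = ε_j^*φ_j, one has (ε_k↑δ_k)^* ι_{δ_k(V)+ε_k(U)}^* φ_k = (ε_j↑δ_j)^* ι_{δ_j(V)+ε_j(U)}^* φ_j. -/
set_option maxHeartbeats 1000000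

namespace Paper

/-- A finite-dimensional vector space over `𝔽_p = ZMod p`: an object of the
categories `𝒱^f` and `𝒱I`. -/
structure FDVec (p : ℕ) [Fact p.Prime] : Type 1 where
  carrier : Type
  [addCommGroup' : AddCommGroup carrier]
  [module' : Module (ZMod p) carrier]
  [finiteDimensional' : FiniteDimensional (ZMod p) carrier]

attribute [instance] FDVec.addCommGroup' FDVec.module' FDVec.finiteDimensional'

instance (p : ℕ) [Fact p.Prime] : CoeSort (FDVec p) Type := ⟨FDVec.carrier⟩

abbrev FDVec.of (p : ℕ) [Fact p.Prime] (X : Type) [AddCommGroup X] [Module (ZMod p) X]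
    [FiniteDimensional (ZMod p) X] : FDVec p := ⟨X⟩

variable {p : ℕ} [Fact p.Prime]

/-- The object of `𝒱I` determined by a subspace. -/
abbrev subFD {W : FDVec p} (U : Submodule (ZMod p) W) : FDVec p := FDVec.of p U

theorem comp_injective {A B C : Type} [AddCommGroup A] [Module (ZMod p) A]
    [AddCommGroup B] [Module (ZMod p) B] [AddCommGroup C] [Module (ZMod p) C]
    (f : A →ₗ[ZMod p] B) (g : B →ₗ[ZMod p] C)
    (hf : Function.Injective f) (hg : Function.Injective g) :
    Function.Injective (g ∘ₗ f) := fun _ _ h => hf (hg h)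

theorem linearMap_id_injective (V : Type) [AddCommGroup V] [Module (ZMod p) V] :
    Function.Injective (LinearMap.id : V →ₗ[ZMod p] V) := fun _ _ h => h

theorem equiv_toLinearMap_injective {A B : Type} [AddCommGroup A] [Module (ZMod p) A]
    [AddCommGroup B] [Module (ZMod p) B] (e : A ≃ₗ[ZMod p] B) :
    Function.Injective (e.toLinearMap : A →ₗ[ZMod p] B) := e.injective

/-- A presheaf on the category `𝒱I` of finite-dimensional `𝔽_p`-vector spaces
and injective linear maps: a contravariant functor to `Set`. -/
structure VIPresheaf (p : ℕ) [Fact p.Prime] where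
  obj : FDVec p → Type
  map : ∀ {V W : FDVec p} (f : V →ₗ[ZMod p] W), Function.Injective f → obj W → obj V
  map_id : ∀ (V : FDVec p) (h : Function.Injective (LinearMap.id : V →ₗ[ZMod p] V))
      (x : obj V), map LinearMap.id h x = x
  map_comp : ∀ {V W X : FDVec p} (f : V →ₗ[ZMod p] W) (hf : Function.Injective f)
      (g : W →ₗ[ZMod p] X) (hg : Function.Injective g)
      (hgf : Function.Injective (g ∘ₗ f)) (x : obj X),
      map (g ∘ₗ f) hgf x = map f hf (map g hg x)

/-- A groupoid whose objects are the pairs `(U, i)` with `U` a subspace of `W i`,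
and whose morphisms are linear isomorphisms between such subspaces. -/
structure SubGroupoid {ι : Type} (W : ι → FDVec p) where
  mor : ∀ (i j : ι) (U : Submodule (ZMod p) (W i)) (U' : Submodule (ZMod p) (W j)),
    Set (↥U ≃ₗ[ZMod p] ↥U')
  id_mem : ∀ i U, LinearEquiv.refl (ZMod p) ↥U ∈ mor i i U U
  comp_mem : ∀ (i j k : ι) (U : Submodule (ZMod p) (W i)) (U' : Submodule (ZMod p) (W j))
      (U'' : Submodule (ZMod p) (W k)) (α : ↥U ≃ₗ[ZMod p] ↥U')
      (β : ↥U' ≃ₗ[ZMod p] ↥U''),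
      α ∈ mor i j U U' → β ∈ mor j k U' U'' → (α.trans β) ∈ mor i k U U''
  inv_mem : ∀ (i j : ι) (U : Submodule (ZMod p) (W i)) (U' : Submodule (ZMod p) (W j))
      (α : ↥U ≃ₗ[ZMod p] ↥U'),
      α ∈ mor i j U U' → α.symm ∈ mor j i U' U

section Restriction

variable {Wi Wj : FDVec p} {U : Submodule (ZMod p) Wi} {U' : Submodule (ZMod p) Wj}

/-- The restriction of `α : U ≃ U'` to a subspace `M ≤ U`, as a map to the ambient space. -/
def restrictMap (α : ↥U ≃ₗ[ZMod p] ↥U') {M : Submodule (ZMod p) Wi}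
    (hMU : M ≤ U) : ↥M →ₗ[ZMod p] Wj :=
  U'.subtype ∘ₗ (α.toLinearMap) ∘ₗ (Submodule.inclusion hMU)

theorem restrictMap_injective (α : ↥U ≃ₗ[ZMod p] ↥U')
    {M : Submodule (ZMod p) Wi} (hMU : M ≤ U) :
    Function.Injective (restrictMap α hMU) := by
  intro a b hab
  have h1 : α (Submodule.inclusion hMU a) = α (Submodule.inclusion hMU b) := Subtype.ext hab
  have h2 := α.injective h1
  have h3 := congrArg Subtype.val h2
  exact Subtype.ext h3

/-- The image `α(M)` of a subspace `M ≤ U` under `α : U ≃ U'`. -/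
def restrictImg (α : ↥U ≃ₗ[ZMod p] ↥U') {M : Submodule (ZMod p) Wi}
    (hMU : M ≤ U) : Submodule (ZMod p) Wj :=
  LinearMap.range (restrictMap α hMU)

/-- The restriction-corestriction `α_M : M ≃ α(M)` of `α : U ≃ U'` to `M ≤ U`. -/
noncomputable def restrictEquiv (α : ↥U ≃ₗ[ZMod p] ↥U')
    {M : Submodule (ZMod p) Wi} (hMU : M ≤ U) :
    ↥M ≃ₗ[ZMod p] ↥(restrictImg α hMU) :=
  LinearEquiv.ofInjective _ (restrictMap_injective α hMU)

end Restriction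

/-- The restriction property of a groupoid on subspaces. -/
def SubGroupoid.HasRestriction {ι : Type} {W : ι → FDVec p} (G : SubGroupoid W) : Prop :=
  ∀ (i j : ι) (U : Submodule (ZMod p) (W i)) (U' : Submodule (ZMod p) (W j))
    (α : ↥U ≃ₗ[ZMod p] ↥U'), α ∈ G.mor i j U U' →
    ∀ (M : Submodule (ZMod p) (W i)) (hMU : M ≤ U),
      restrictEquiv α hMU ∈ G.mor i j M (restrictImg α hMU)

/-- An element of `⊔_{i} Hom_{𝒱I}(V, W i)`. -/
def InjHom (V : FDVec p) {ι : Type} (W : ι → FDVec p) : Type :=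
  Σ i : ι, {f : V →ₗ[ZMod p] W i // Function.Injective f}

/-- The relation `∼_𝒢` on `⊔_i Hom_{𝒱I}(V, W i)`. -/
def SubGroupoid.Rel {ι : Type} {W : ι → FDVec p} (G : SubGroupoid W) (V : FDVec p)
    (x y : InjHom V W) : Prop :=
  ∃ α ∈ G.mor x.1 y.1 (LinearMap.range x.2.1) (LinearMap.range y.2.1),
    ∀ v : V, ((α (x.2.1.rangeRestrict v) : ↥(LinearMap.range y.2.1)) : W y.1) = y.2.1 v

/-- A generating family of a presheaf `F` on `𝒱I`: a natural surjection
`q : ⊔_i Hom_{𝒱I}(−, W i) → F`. -/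
structure GenFamily {ι : Type} (W : ι → FDVec p) (F : VIPresheaf p) where
  q : ∀ (V : FDVec p) (i : ι) (f : V →ₗ[ZMod p] W i), Function.Injective f → F.obj V
  natural : ∀ (T V : FDVec p) (β : T →ₗ[ZMod p] V) (hβ : Function.Injective β)
      (i : ι) (f : V →ₗ[ZMod p] W i) (hf : Function.Injective f)
      (hfβ : Function.Injective (f ∘ₗ β)),
      q T i (f ∘ₗ β) hfβ = F.map β hβ (q V i f hf)
  surjective : ∀ (V : FDVec p) (x : F.obj V), ∃ i f hf, q V i f hf = x

/-- `φ_i = q(id_{W i})`. -/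
def GenFamily.phi {ι : Type} {W : ι → FDVec p} {F : VIPresheaf p} (Q : GenFamily W F)
    (i : ι) : F.obj (W i) :=
  Q.q (W i) i LinearMap.id (linearMap_id_injective _)

/-- The morphisms of the groupoid `𝒢_{(F,q)}`: isomorphisms `α : U ≃ U'` with
`α^* ι_{U'}^* φ_j = ι_U^* φ_i`. -/
def GenFamily.mor {ι : Type} {W : ι → FDVec p} {F : VIPresheaf p} (Q : GenFamily W F)
    (i j : ι) (U : Submodule (ZMod p) (W i)) (U' : Submodule (ZMod p) (W j)) :
    Set (↥U ≃ₗ[ZMod p] ↥U') :=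
  {α | F.map (V := subFD U) (W := subFD U') α.toLinearMap (equiv_toLinearMap_injective α)
        (F.map (V := subFD U') (W := W j) U'.subtype U'.injective_subtype (Q.phi j))
      = F.map (V := subFD U) (W := W i) U.subtype U.injective_subtype (Q.phi i)}

/-- The relation `∼_{𝒢_{(F,q)}}`. -/
def GenFamily.GRel {ι : Type} {W : ι → FDVec p} {F : VIPresheaf p} (Q : GenFamily W F)
    (V : FDVec p) (x y : InjHom V W) : Prop :=
  ∃ α ∈ Q.mor x.1 y.1 (LinearMap.range x.2.1) (LinearMap.range y.2.1),
    ∀ v : V, ((α (x.2.1.rangeRestrict v) : ↥(LinearMap.range y.2.1)) : W y.1) = y.2.1 v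

/-- `x ∈ F_i(V)`, where `F_i ⊆ F` is the image of `Hom_{𝒱I}(−, W i)` under `q`. -/
def GenFamily.memComponent {ι : Type} {W : ι → FDVec p} {F : VIPresheaf p}
    (Q : GenFamily W F) (i : ι) (V : FDVec p) (x : F.obj V) : Prop :=
  ∃ f hf, Q.q V i f hf = x

/-- Minimality of a generating family: `F_i ⊄ F_j` for `i ≠ j`. -/
def GenFamily.Minimal {ι : Type} {W : ι → FDVec p} {F : VIPresheaf p}
    (Q : GenFamily W F) : Prop :=
  ∀ i j : ι, i ≠ j →
    ¬ (∀ (V : FDVec p) (x : F.obj V), Q.memComponent i V x → Q.memComponent j V x)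

/-- A class in `𝐁(V, W)`, represented canonically by its "glue" subspace
`G = {(ν m, −ω m) : m ∈ M} ⊆ V × W`.  The two conditions express the injectivity
of `ν` and of `ω` respectively. -/
structure Corr (p : ℕ) [Fact p.Prime] (V W : FDVec p) where
  carrier : Submodule (ZMod p) (↥V × ↥W)
  inj_left : ∀ m ∈ carrier, Prod.fst m = 0 → m = 0
  inj_right : ∀ m ∈ carrier, Prod.snd m = 0 → m = 0

/-- The pushout `V ⊕_{ν,ω} W` of a class of `𝐁(V,W)`. -/
abbrev Corr.po {V W : FDVec p} (c : Corr p V W) : FDVec p :=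
  FDVec.of p ((↥V × ↥W) ⧸ c.carrier)

/-- The canonical injection `ι_V : V → V ⊕_{ν,ω} W`. -/
def Corr.inl {V W : FDVec p} (c : Corr p V W) : V →ₗ[ZMod p] c.po :=
  c.carrier.mkQ ∘ₗ LinearMap.inl (ZMod p) ↥V ↥W

/-- The canonical injection `ι_W : W → V ⊕_{ν,ω} W`. -/
def Corr.inr {V W : FDVec p} (c : Corr p V W) : W →ₗ[ZMod p] c.po :=
  c.carrier.mkQ ∘ₗ LinearMap.inr (ZMod p) ↥V ↥W

theorem Corr.inl_injective {V W : FDVec p} (c : Corr p V W) :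
    Function.Injective c.inl := by
  intro a b hab
  have h : (Submodule.Quotient.mk ((a, 0) : ↥V × ↥W) : (↥V × ↥W) ⧸ c.carrier)
      = Submodule.Quotient.mk (b, 0) := hab
  have hmem : ((a, 0) : ↥V × ↥W) - (b, 0) ∈ c.carrier := by
    rwa [Submodule.Quotient.eq] at h
  have h2 := c.inj_right _ hmem (by simp)
  have h3 := congrArg Prod.fst h2
  simpa [sub_eq_zero] using h3

theorem Corr.inr_injective {V W : FDVec p} (c : Corr p V W) :
    Function.Injective c.inr := by
  intro a b hab
  have h : (Submodule.Quotient.mk ((0, a) : ↥V × ↥W) : (↥V × ↥W) ⧸ c.carrier)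
      = Submodule.Quotient.mk (0, b) := hab
  have hmem : ((0, a) : ↥V × ↥W) - (0, b) ∈ c.carrier := by
    rwa [Submodule.Quotient.eq] at h
  have h2 := c.inj_left _ hmem (by simp)
  have h3 := congrArg Prod.snd h2
  simpa [sub_eq_zero] using h3

/-- The fibre `σ_{(V,x)}F(W)` of `σ_V F(W) = ⊔_{𝐁(V,W)} F(V ⊕_{ν,ω} W)` over `x ∈ F(V)`. -/
def CentralFib (F : VIPresheaf p) (V : FDVec p) (x : F.obj V) (W : FDVec p) : Type :=
  Σ c : Corr p V W,
    {b : F.obj c.po // F.map (V := V) (W := c.po) c.inl c.inl_injective b = x}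

/-- The map `ρ_{F,(V,x)} : σ_{(V,x)}F(W) → F(W)`, sending `b` to `ι_W^* b`. -/
def centralMap (F : VIPresheaf p) (V : FDVec p) (x : F.obj V) (W : FDVec p) :
    CentralFib F V x W → F.obj W :=
  fun s => F.map (V := W) (W := Sigma.fst s |>.po) s.1.inr s.1.inr_injective s.2.1

/-- `(V, x)` is central for `F` if `ρ_{F,(V,x)}` is an isomorphism of presheaves. -/
def VIPresheaf.IsCentral (F : VIPresheaf p) (V : FDVec p) (x : F.obj V) : Prop :=
  ∀ W : FDVec p, Function.Bijective (centralMap F V x W)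

/-- The class of `𝐁(V, U)` associated with a pair of injections `δ : V → W`, `ε : U → W`:
its glue subspace is `ker(δ + ε) ⊆ V × U`. -/
def kerCorr {V U W : FDVec p} (δ : V →ₗ[ZMod p] W) (ε : U →ₗ[ZMod p] W)
    (hδ : Function.Injective δ) (hε : Function.Injective ε) : Corr p V U where
  carrier := LinearMap.ker (δ.coprod ε)
  inj_left := by
    intro m hm h1
    have hk : δ m.1 + ε m.2 = 0 := by simpa [LinearMap.mem_ker] using hm
    rw [h1] at hk
    simp only [map_zero, zero_add] at hk
    have h2 : m.2 = 0 := hε (by simpa using hk)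
    exact Prod.ext h1 h2
  inj_right := by
    intro m hm h2
    have hk : δ m.1 + ε m.2 = 0 := by simpa [LinearMap.mem_ker] using hm
    rw [h2] at hk
    simp only [map_zero, add_zero] at hk
    have h1 : m.1 = 0 := hδ (by simpa using hk)
    exact Prod.ext h1 h2

/-- The isomorphism `ε ↑ δ : V ⊕_{ν,μ} U ≃ δ(V) + ε(U)` of the first isomorphism theorem. -/
noncomputable def upArrow {V U W : FDVec p} (δ : V →ₗ[ZMod p] W) (ε : U →ₗ[ZMod p] W) :
    ((↥V × ↥U) ⧸ LinearMap.ker (δ.coprod ε)) ≃ₗ[ZMod p]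
      ↥(LinearMap.range δ ⊔ LinearMap.range ε : Submodule (ZMod p) W) :=
  (δ.coprod ε).quotKerEquivRange ≪≫ₗ LinearEquiv.ofEq _ _ (LinearMap.range_coprod δ ε)

/-- The class `[T, id_T, α] ∈ 𝐁(V, T)` associated with an injection `α : T → V`. -/
def idCorr {V T : FDVec p} (α : T →ₗ[ZMod p] V) (hα : Function.Injective α) :
    Corr p V T where
  carrier := LinearMap.range (α.prod (-(LinearMap.id : T →ₗ[ZMod p] T)))
  inj_left := by
    rintro m ⟨t, rfl⟩ h1
    simp only [LinearMap.prod_apply, Pi.prod, LinearMap.neg_apply, LinearMap.id_apply] at h1 ⊢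
    have ht : t = 0 := hα (by simpa using h1)
    simp [ht]
  inj_right := by
    rintro m ⟨t, rfl⟩ h2
    simp only [LinearMap.prod_apply, Pi.prod, LinearMap.neg_apply, LinearMap.id_apply] at h2 ⊢
    have ht : t = 0 := by simpa [neg_eq_zero] using h2
    simp [ht]

theorem VIPresheaf.map_map_map_of_comp_eq (F : VIPresheaf p) {A B C D : FDVec p}
    (f : A →ₗ[ZMod p] B) (hf : Function.Injective f)
    (g : B →ₗ[ZMod p] C) (hg : Function.Injective g)
    (h : C →ₗ[ZMod p] D) (hh : Function.Injective h)
    (l : A →ₗ[ZMod p] D) (hl : Function.Injective l)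
    (heq : ∀ a, h (g (f a)) = l a) (x : F.obj D) :
    F.map f hf (F.map g hg (F.map h hh x)) = F.map l hl x := by
  obtain rfl : h ∘ₗ (g ∘ₗ f) = l := LinearMap.ext heq
  rw [F.map_comp (g ∘ₗ f) (comp_injective f g hf hg) h hh hl,
    F.map_comp f hf g hg (comp_injective f g hf hg)]

theorem coe_upArrow_mk {V U W : FDVec p} (δ : V →ₗ[ZMod p] W) (ε : U →ₗ[ZMod p] W)
    (a : ↥V × ↥U) :
    (upArrow δ ε (Submodule.Quotient.mk a) : W) = δ a.1 + ε a.2 := rfl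

/-- The element `(ε ↑ δ)^* ι_{δ(V)+ε(U)}^* y` of `F(V ⊕_{ν,μ} U)`. -/
noncomputable def VIPresheaf.upPullback (F : VIPresheaf p) {V U W : FDVec p}
    (δ : V →ₗ[ZMod p] W) (hδ : Function.Injective δ)
    (ε : U →ₗ[ZMod p] W) (hε : Function.Injective ε) (y : F.obj W) :
    F.obj (kerCorr δ ε hδ hε).po :=
  F.map (upArrow δ ε).toLinearMap (equiv_toLinearMap_injective _)
    (F.map (V := subFD (LinearMap.range δ ⊔ LinearMap.range ε)) (W := W)
      (LinearMap.range δ ⊔ LinearMap.range ε).subtype (Submodule.injective_subtype _) y)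

theorem VIPresheaf.map_inl_upPullback (F : VIPresheaf p) {V U W : FDVec p}
    (δ : V →ₗ[ZMod p] W) (hδ : Function.Injective δ)
    (ε : U →ₗ[ZMod p] W) (hε : Function.Injective ε) (y : F.obj W) :
    F.map (W := (kerCorr δ ε hδ hε).po) (kerCorr δ ε hδ hε).inl
      (kerCorr δ ε hδ hε).inl_injective (F.upPullback δ hδ ε hε y) = F.map δ hδ y :=
  F.map_map_map_of_comp_eq _ _ _ _ _ _ _ _
    (fun v => (coe_upArrow_mk δ ε (v, 0)).trans (by simp)) y

theorem VIPresheaf.map_inr_upPullback (F : VIPresheaf p) {V U W : FDVec p}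
    (δ : V →ₗ[ZMod p] W) (hδ : Function.Injective δ)
    (ε : U →ₗ[ZMod p] W) (hε : Function.Injective ε) (y : F.obj W) :
    F.map (W := (kerCorr δ ε hδ hε).po) (kerCorr δ ε hδ hε).inr
      (kerCorr δ ε hδ hε).inr_injective (F.upPullback δ hδ ε hε y) = F.map ε hε y :=
  F.map_map_map_of_comp_eq _ _ _ _ _ _ _ _
    (fun u => (coe_upArrow_mk δ ε (0, u)).trans (by simp)) y

/-- **Statement 14.** Let `(F, q_F)` be an object of `_{(W_i)}Set^{(𝒱I)ᵒᵖ}`, let `(V,x)` be a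
central element of `F`, and for each `i` let `δ_i : V → W_i` be injective with
`x = δ_i^* φ_i`.  Then for all injective `ε_k : U → W_k`, `ε_j : U → W_j` with
`ε_k^* φ_k = ε_j^* φ_j`, one has
`(ε_k ↑ δ_k)^* ι_{δ_k(V)+ε_k(U)}^* φ_k = (ε_j ↑ δ_j)^* ι_{δ_j(V)+ε_j(U)}^* φ_j`
(as elements of `σ_V F(U)`, i.e. equality of the classes together with the elements). -/
theorem statement_14 {p : ℕ} [Fact p.Prime] {ι : Type} (W : ι → FDVec p)
    (F : VIPresheaf p) (Q : GenFamily W F)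
    (V : FDVec p) (x : F.obj V) (hx : F.IsCentral V x)
    (δ : ∀ i, V →ₗ[ZMod p] W i) (hδ : ∀ i, Function.Injective (δ i))
    (hxδ : ∀ i, x = F.map (δ i) (hδ i) (Q.phi i))
    (U : FDVec p) (k j : ι)
    (εk : U →ₗ[ZMod p] W k) (hεk : Function.Injective εk)
    (εj : U →ₗ[ZMod p] W j) (hεj : Function.Injective εj)
    (hφ : F.map εk hεk (Q.phi k) = F.map εj hεj (Q.phi j))
    (bk : F.obj (kerCorr (δ k) εk (hδ k) hεk).po)
    (hbk : bk = F.map (upArrow (δ k) εk).toLinearMap (equiv_toLinearMap_injective _)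
        (F.map (V := subFD (LinearMap.range (δ k) ⊔ LinearMap.range εk)) (W := W k)
          (LinearMap.range (δ k) ⊔ LinearMap.range εk).subtype
          (Submodule.injective_subtype _) (Q.phi k)))
    (bj : F.obj (kerCorr (δ j) εj (hδ j) hεj).po)
    (hbj : bj = F.map (upArrow (δ j) εj).toLinearMap (equiv_toLinearMap_injective _)
        (F.map (V := subFD (LinearMap.range (δ j) ⊔ LinearMap.range εj)) (W := W j)
          (LinearMap.range (δ j) ⊔ LinearMap.range εj).subtype
          (Submodule.injective_subtype _) (Q.phi j))) :
    (⟨kerCorr (δ k) εk (hδ k) hεk, bk⟩ : Σ c : Corr p V U, F.obj c.po)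
      = ⟨kerCorr (δ j) εj (hδ j) hεj, bj⟩ := by
  subst hbk hbj
  let s (i : ι) (ε : U →ₗ[ZMod p] W i) (hε : Function.Injective ε) : CentralFib F V x U :=
    ⟨kerCorr (δ i) ε (hδ i) hε, F.upPullback (δ i) (hδ i) ε hε (Q.phi i),
      (F.map_inl_upPullback _ _ _ _ _).trans (hxδ i).symm⟩
  have hs : s k εk hεk = s j εj hεj := (hx U).injective <|
    (F.map_inr_upPullback _ _ _ _ _).trans <| hφ.trans (F.map_inr_upPullback _ _ _ _ _).symm
  exact congrArg (fun t : CentralFib F V x U => (⟨t.1, t.2.1⟩ : Σ c : Corr p V U, F.obj c.po)) hs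

end Paper
end

section
/- Let F be a presheaf on 𝒱I with a minimal generating family ((W_i)_{i∈I}, q), let (V,x) be a central element of F, and for each i ∈ I let δ_i : V → W_i be an injective linear map with x = δ_i^*φ_i; write V_i := δ_i(V). Then for every morphism α ∈ 𝒢_{(F,q)}(U ⊆ W_i, U' ⊆ W_j) and every v ∈ U ∩ V_i, one has α(v) = δ_j((δ_i|^{V_i})^{-1}(v)), where δ_i|^{V_i} : V → V_i is the corestriction of δ_i. -/
set_option maxHeartbeats 1000000

namespace Paper

variable {p : ℕ} [Fact p.Prime]

/-- The comparison map from the pushout along `kerCorr δ ε` to the common target. -/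
def kerCorrDesc {V U W : FDVec p} (δ : V →ₗ[ZMod p] W) (ε : U →ₗ[ZMod p] W)
    (hδ : Function.Injective δ) (hε : Function.Injective ε) :
    (kerCorr δ ε hδ hε).po →ₗ[ZMod p] W :=
  (LinearMap.ker (δ.coprod ε)).liftQ (δ.coprod ε) le_rfl

theorem kerCorrDesc_injective {V U W : FDVec p} (δ : V →ₗ[ZMod p] W) (ε : U →ₗ[ZMod p] W)
    (hδ : Function.Injective δ) (hε : Function.Injective ε) :
    Function.Injective (kerCorrDesc δ ε hδ hε) :=
  LinearMap.ker_eq_bot.mp (Submodule.ker_liftQ_eq_bot' _ _ rfl)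

theorem kerCorrDesc_comp_inl {V U W : FDVec p} (δ : V →ₗ[ZMod p] W) (ε : U →ₗ[ZMod p] W)
    (hδ : Function.Injective δ) (hε : Function.Injective ε) :
    kerCorrDesc δ ε hδ hε ∘ₗ (kerCorr δ ε hδ hε).inl = δ := by
  ext v
  change δ v + ε 0 = δ v
  simp

theorem kerCorrDesc_comp_inr {V U W : FDVec p} (δ : V →ₗ[ZMod p] W) (ε : U →ₗ[ZMod p] W)
    (hδ : Function.Injective δ) (hε : Function.Injective ε) :
    kerCorrDesc δ ε hδ hε ∘ₗ (kerCorr δ ε hδ hε).inr = ε := by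
  ext u
  change δ 0 + ε u = ε u
  simp

theorem VIPresheaf.map_map_of_comp_eq (F : VIPresheaf p) {A B C : FDVec p}
    (f : A →ₗ[ZMod p] B) (hf : Function.Injective f) (g : B →ₗ[ZMod p] C)
    (hg : Function.Injective g) (k : A →ₗ[ZMod p] C) (hk : Function.Injective k)
    (hgf : g ∘ₗ f = k) (z : F.obj C) :
    F.map f hf (F.map g hg z) = F.map k hk z := by
  subst hgf
  exact (F.map_comp f hf g hg hk z).symm

/-- The element of the fibre over `δ^* z` obtained by pulling `z` back to the pushout. -/
def fibOfPair (F : VIPresheaf p) {V U W : FDVec p} (δ : V →ₗ[ZMod p] W)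
    (ε : U →ₗ[ZMod p] W) (hδ : Function.Injective δ) (hε : Function.Injective ε)
    (z : F.obj W) (x : F.obj V) (hx : x = F.map δ hδ z) : CentralFib F V x U :=
  ⟨kerCorr δ ε hδ hε, F.map (kerCorrDesc δ ε hδ hε) (kerCorrDesc_injective δ ε hδ hε) z, by
    rw [hx]
    exact F.map_map_of_comp_eq _ _ _ _ _ _ (kerCorrDesc_comp_inl δ ε hδ hε) z⟩

theorem centralMap_fibOfPair (F : VIPresheaf p) {V U W : FDVec p} (δ : V →ₗ[ZMod p] W)
    (ε : U →ₗ[ZMod p] W) (hδ : Function.Injective δ) (hε : Function.Injective ε)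
    (z : F.obj W) (x : F.obj V) (hx : x = F.map δ hδ z) :
    centralMap F V x U (fibOfPair F δ ε hδ hε z x hx) = F.map ε hε z :=
  F.map_map_of_comp_eq _ _ _ _ _ _ (kerCorrDesc_comp_inr δ ε hδ hε) z

/-- Two maps out of `U` that pull back to the same element of `F` meet the central `(V, x)`
in the same way. -/
theorem VIPresheaf.IsCentral.ker_coprod_eq {F : VIPresheaf p} {V : FDVec p} {x : F.obj V}
    (hx : F.IsCentral V x) {U W W' : FDVec p}
    (δ : V →ₗ[ZMod p] W) (ε : U →ₗ[ZMod p] W) (hδ : Function.Injective δ)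
    (hε : Function.Injective ε) (z : F.obj W) (hz : x = F.map δ hδ z)
    (δ' : V →ₗ[ZMod p] W') (ε' : U →ₗ[ZMod p] W') (hδ' : Function.Injective δ')
    (hε' : Function.Injective ε') (z' : F.obj W') (hz' : x = F.map δ' hδ' z')
    (h : F.map ε hε z = F.map ε' hε' z') :
    LinearMap.ker (δ.coprod ε) = LinearMap.ker (δ'.coprod ε') := by
  have hfib : fibOfPair F δ ε hδ hε z x hz = fibOfPair F δ' ε' hδ' hε' z' x hz' :=
    (hx U).1 (by rw [centralMap_fibOfPair, centralMap_fibOfPair, h])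
  exact congrArg (fun s => s.1.carrier) hfib

/-- **Statement 15.** Let `F` have a minimal generating family `((W_i), q)`, let `(V,x)` be
central for `F`, and for each `i` let `δ_i : V → W_i` be injective with `x = δ_i^* φ_i`;
`V_i := δ_i(V)`.  Then for every `α ∈ 𝒢_{(F,q)}(U ⊆ W_i, U' ⊆ W_j)` and every
`v ∈ U ∩ V_i`, one has `α(v) = δ_j((δ_i|^{V_i})⁻¹(v))`; i.e. whenever `δ_i w ∈ U`,
`α(δ_i w) = δ_j w`. -/
theorem statement_15 {p : ℕ} [Fact p.Prime] {ι : Type} (W : ι → FDVec p)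
    (F : VIPresheaf p) (Q : GenFamily W F) (hmin : Q.Minimal)
    (V : FDVec p) (x : F.obj V) (hx : F.IsCentral V x)
    (δ : ∀ i, V →ₗ[ZMod p] W i) (hδ : ∀ i, Function.Injective (δ i))
    (hxδ : ∀ i, x = F.map (δ i) (hδ i) (Q.phi i))
    (i j : ι) (U : Submodule (ZMod p) (W i)) (U' : Submodule (ZMod p) (W j))
    (α : ↥U ≃ₗ[ZMod p] ↥U') (hα : α ∈ Q.mor i j U U')
    (w : ↥V) (hw : δ i w ∈ U) :
    ((α ⟨δ i w, hw⟩ : ↥U') : ↥(W j)) = δ j w := by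
  have hε' : Function.Injective (U'.subtype ∘ₗ α.toLinearMap) :=
    U'.injective_subtype.comp α.injective
  have hker := hx.ker_coprod_eq (U := subFD U) (δ i) U.subtype (hδ i) U.injective_subtype
    (Q.phi i) (hxδ i) (δ j) (U'.subtype ∘ₗ α.toLinearMap) (hδ j) hε' (Q.phi j) (hxδ j)
    (hα.symm.trans (F.map_map_of_comp_eq (A := subFD U) (B := subFD U') _ _ _ _ _ hε' rfl _))
  have hmem : ((-w, ⟨δ i w, hw⟩) : V × U) ∈ LinearMap.ker ((δ i).coprod U.subtype) := by
    simp [LinearMap.mem_ker]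
  rw [hker, LinearMap.mem_ker] at hmem
  have hsum : δ j (-w) + ((α ⟨δ i w, hw⟩ : U') : W j) = 0 := hmem
  rwa [map_neg, neg_add_eq_zero, eq_comm] at hsum

end Paper
end

section
/- Let F be a presheaf on 𝒱I with a minimal generating family ((W_i)_{i∈I}, q), let x ∈ F(V), and let (δ_i : V → W_i)_{i∈I} be a family of injective linear maps such that x = δ_i^*φ_i for all i ∈ I; write V_i := δ_i(V). Then (V,x) is central for F if and only if the following two conditions hold: (1) for every α ∈ 𝒢_{(F,q)}(U ⊆ W_i, U' ⊆ W_j) and every v ∈ U ∩ V_i, α(v) = δ_j((δ_i|^{V_i})^{-1}(v)); (2) for all subspaces U ⊆ W_i and U' ⊆ W_j and every linear isomorphism α : U → U' satisfying α(v) = δ_j((δ_i|^{V_i})^{-1}(v)) for all v ∈ U ∩ V_i, one has α ∈ 𝒢_{(F,q)}(U ⊆ W_i, U' ⊆ W_j) if and only if ᾱ ∈ 𝒢_{(F,q)}(U+V_i ⊆ W_i, U'+V_j ⊆ W_j), where ᾱ : U+V_i → U'+V_j is the linear map sending u ∈ U to α(u) and v ∈ V_i to δ_j((δ_i|^{V_i})^{-1}(v)).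 -/
set_option maxHeartbeats 1000000

namespace Paper

variable {p : ℕ} [Fact p.Prime]

theorem GenFamily.q_eq_map_phi {ι : Type} {W : ι → FDVec p} {F : VIPresheaf p}
    (Q : GenFamily W F) {T : FDVec p} {i : ι} (f : T →ₗ[ZMod p] W i)
    (hf : Function.Injective f) : Q.q T i f hf = F.map f hf (Q.phi i) :=
  Q.natural T (W i) f hf i LinearMap.id (linearMap_id_injective _) hf

theorem GenFamily.q_congr {ι : Type} {W : ι → FDVec p} {F : VIPresheaf p}
    (Q : GenFamily W F) {T : FDVec p} {i : ι} {f g : T →ₗ[ZMod p] W i} (h : f = g)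
    (hf : Function.Injective f) (hg : Function.Injective g) :
    Q.q T i f hf = Q.q T i g hg := by
  subst h
  rfl

/-- Membership in `𝒢_{(F,q)}` tested on parametrizations of the source and the target. -/
theorem GenFamily.mem_mor_iff {ι : Type} {W : ι → FDVec p} {F : VIPresheaf p}
    (Q : GenFamily W F) {T : FDVec p} {i j : ι} {U : Submodule (ZMod p) (W i)}
    {U' : Submodule (ZMod p) (W j)} (α : ↥U ≃ₗ[ZMod p] ↥U')
    (f : T →ₗ[ZMod p] W i) (hf : Function.Injective f)
    (g : T →ₗ[ZMod p] W j) (hg : Function.Injective g)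
    (hU : LinearMap.range f = U)
    (h : ∀ t (ht : f t ∈ U), ((α ⟨f t, ht⟩ : ↥U') : ↥(W j)) = g t) :
    α ∈ Q.mor i j U U' ↔ Q.q T i f hf = Q.q T j g hg := by
  subst hU
  have hUα : Function.Injective (U'.subtype ∘ₗ α.toLinearMap) :=
    comp_injective _ _ α.injective U'.injective_subtype
  let e := LinearEquiv.ofInjective f hf
  have he : Function.Injective e.symm.toLinearMap := e.symm.injective
  have hfe : f ∘ₗ e.symm.toLinearMap = (LinearMap.range f).subtype := by
    ext u
    exact congrArg Subtype.val (e.apply_symm_apply u)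
  have hge : g ∘ₗ e.symm.toLinearMap = U'.subtype ∘ₗ α.toLinearMap := by
    ext u
    have := h (e.symm u) (LinearMap.mem_range_self f _)
    rw [LinearMap.comp_apply, LinearEquiv.coe_coe, ← this]
    exact congrArg (fun v => ((α v : ↥U') : ↥(W j))) (e.apply_symm_apply u)
  have hgα : g = (U'.subtype ∘ₗ α.toLinearMap) ∘ₗ e.toLinearMap := by
    ext t
    exact (h t (LinearMap.mem_range_self f t)).symm
  have hmor : α ∈ Q.mor i j (LinearMap.range f) U' ↔
      Q.q (subFD (LinearMap.range f)) j (U'.subtype ∘ₗ α.toLinearMap) hUα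
        = Q.q (subFD (LinearMap.range f)) i (LinearMap.range f).subtype
          (LinearMap.range f).injective_subtype := by
    rw [Q.natural (subFD _) (subFD U') α.toLinearMap α.injective j U'.subtype
      U'.injective_subtype hUα, Q.q_eq_map_phi (T := subFD U'),
      Q.q_eq_map_phi (T := subFD (LinearMap.range f))]
    rfl
  rw [hmor]
  constructor
  · intro hq
    have h1 := Q.natural T (subFD (LinearMap.range f)) e.toLinearMap e.injective i
      (LinearMap.range f).subtype (LinearMap.range f).injective_subtype hf
    have h2 := Q.natural T (subFD (LinearMap.range f)) e.toLinearMap e.injective j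
      (U'.subtype ∘ₗ α.toLinearMap) hUα (hgα ▸ hg)
    rw [hq, ← h1] at h2
    exact ((Q.q_congr hgα hg _).trans h2).symm
  · intro hq
    have h1 := Q.natural (subFD (LinearMap.range f)) T e.symm.toLinearMap he i f hf
      (comp_injective _ _ he hf)
    have h2 := Q.natural (subFD (LinearMap.range f)) T e.symm.toLinearMap he j g hg
      (comp_injective _ _ he hg)
    rw [← hq, ← h1] at h2
    simp only [hfe, hge] at h2
    exact h2

/-- Two injections from a common source induce an isomorphism between their ranges. -/
theorem exists_equiv_of_range_eq {T A B : FDVec p}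
    (f : T →ₗ[ZMod p] A) (hf : Function.Injective f)
    (g : T →ₗ[ZMod p] B) (hg : Function.Injective g)
    {U : Submodule (ZMod p) A} {U' : Submodule (ZMod p) B}
    (hU : LinearMap.range f = U) (hU' : LinearMap.range g = U') :
    ∃ α : ↥U ≃ₗ[ZMod p] ↥U', ∀ t (ht : f t ∈ U), ((α ⟨f t, ht⟩ : ↥U') : ↥B) = g t := by
  subst hU hU'
  refine ⟨(LinearEquiv.ofInjective f hf).symm.trans (LinearEquiv.ofInjective g hg), ?_⟩
  intro t ht
  have : (⟨f t, ht⟩ : ↥(LinearMap.range f)) = LinearEquiv.ofInjective f hf t := rfl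
  rw [this, LinearEquiv.trans_apply, LinearEquiv.symm_apply_apply]
  rfl

theorem Corr.ext_carrier {V W : FDVec p} {c d : Corr p V W} (h : c.carrier = d.carrier) :
    c = d := by
  cases c
  cases d
  cases h
  rfl

theorem Corr.mk_eq {V U : FDVec p} (c : Corr p V U) (v : V) (u : U) :
    (Submodule.Quotient.mk (v, u) : (↥V × ↥U) ⧸ c.carrier) = c.inl v + c.inr u := by
  have : ((v, u) : ↥V × ↥U) = (v, 0) + (0, u) := by simp
  rw [this]
  rfl

theorem Corr.exists_eq {V U : FDVec p} (c : Corr p V U) (z : c.po) :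
    ∃ v u, z = c.inl v + c.inr u := by
  obtain ⟨⟨v, u⟩, rfl⟩ := Submodule.Quotient.mk_surjective _ z
  exact ⟨v, u, c.mk_eq v u⟩

theorem Corr.mem_carrier_iff {V U A : FDVec p} (c : Corr p V U) (f : c.po →ₗ[ZMod p] A)
    (hf : Function.Injective f) (v : V) (u : U) :
    (v, u) ∈ c.carrier ↔ f (c.inl v) + f (c.inr u) = 0 := by
  rw [← map_add, ← Corr.mk_eq, map_eq_zero_iff f hf, Submodule.Quotient.mk_eq_zero]

theorem Corr.range_eq {V U A : FDVec p} (c : Corr p V U) (f : c.po →ₗ[ZMod p] A) :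
    LinearMap.range f = LinearMap.range (f ∘ₗ c.inr) ⊔ LinearMap.range (f ∘ₗ c.inl) := by
  apply le_antisymm
  · rintro _ ⟨z, rfl⟩
    obtain ⟨v, u, rfl⟩ := c.exists_eq z
    rw [map_add, add_comm]
    exact Submodule.add_mem_sup ⟨u, rfl⟩ ⟨v, rfl⟩
  · exact sup_le (LinearMap.range_comp_le_range _ _) (LinearMap.range_comp_le_range _ _)

/-- A pair of injections into a common target factors through an injection of the
associated pushout. -/
theorem exists_kerCorr_lift {V U A : FDVec p} (δ : V →ₗ[ZMod p] A) (ε : U →ₗ[ZMod p] A)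
    (hδ : Function.Injective δ) (hε : Function.Injective ε) :
    ∃ f : (kerCorr δ ε hδ hε).po →ₗ[ZMod p] A, Function.Injective f ∧
      f ∘ₗ (kerCorr δ ε hδ hε).inl = δ ∧ f ∘ₗ (kerCorr δ ε hδ hε).inr = ε := by
  refine ⟨(LinearMap.ker (δ.coprod ε)).liftQ (δ.coprod ε) le_rfl, ?_, ?_, ?_⟩
  · exact LinearMap.ker_eq_bot.mp (Submodule.ker_liftQ_eq_bot _ _ _ le_rfl)
  · ext v
    change δ v + ε 0 = δ v
    simp
  · ext u
    change δ 0 + ε u = ε u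
    simp

section Central

variable {ι : Type} {W : ι → FDVec p} {F : VIPresheaf p} (Q : GenFamily W F)
  {V : FDVec p} {x : F.obj V}

/-- The element of `σ_{(V,x)}F(U)` given by an injection of a pushout into `W i`. -/
def GenFamily.fib {U : FDVec p} (c : Corr p V U) {i : ι} (f : c.po →ₗ[ZMod p] W i)
    (hf : Function.Injective f)
    (hx : Q.q V i (f ∘ₗ c.inl) (comp_injective _ _ c.inl_injective hf) = x) :
    CentralFib F V x U :=
  ⟨c, Q.q c.po i f hf, by rw [← Q.natural]; exact hx⟩

theorem GenFamily.centralMap_fib {U : FDVec p} (c : Corr p V U) {i : ι}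
    (f : c.po →ₗ[ZMod p] W i) (hf : Function.Injective f)
    (hx : Q.q V i (f ∘ₗ c.inl) (comp_injective _ _ c.inl_injective hf) = x) :
    centralMap F V x U (Q.fib c f hf hx)
      = Q.q U i (f ∘ₗ c.inr) (comp_injective _ _ c.inr_injective hf) :=
  (Q.natural _ _ _ _ _ _ _ _).symm


/-- For central `(V, x)`, sections agreeing over `U` have the same gluing relation. -/
theorem GenFamily.eq_carrier_of_isCentral (hc : F.IsCentral V x) {U : FDVec p}
    {c d : Corr p V U} {i j : ι}
    (f : c.po →ₗ[ZMod p] W i) (hf : Function.Injective f)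
    (g : d.po →ₗ[ZMod p] W j) (hg : Function.Injective g)
    (hfx : Q.q V i (f ∘ₗ c.inl) (comp_injective _ _ c.inl_injective hf) = x)
    (hgx : Q.q V j (g ∘ₗ d.inl) (comp_injective _ _ d.inl_injective hg) = x)
    (hfg : Q.q U i (f ∘ₗ c.inr) (comp_injective _ _ c.inr_injective hf)
      = Q.q U j (g ∘ₗ d.inr) (comp_injective _ _ d.inr_injective hg)) : c = d :=
  congrArg Sigma.fst <| (hc U).1 (a₁ := Q.fib c f hf hfx) (a₂ := Q.fib d g hg hgx) <| by
    rw [Q.centralMap_fib, Q.centralMap_fib, hfg]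

/-- For central `(V, x)`, sections over the same pushout agreeing over `U` are equal. -/
theorem GenFamily.q_eq_of_isCentral (hc : F.IsCentral V x) {U : FDVec p}
    {c : Corr p V U} {i j : ι}
    (f : c.po →ₗ[ZMod p] W i) (hf : Function.Injective f)
    (g : c.po →ₗ[ZMod p] W j) (hg : Function.Injective g)
    (hfx : Q.q V i (f ∘ₗ c.inl) (comp_injective _ _ c.inl_injective hf) = x)
    (hgx : Q.q V j (g ∘ₗ c.inl) (comp_injective _ _ c.inl_injective hg) = x)
    (hfg : Q.q U i (f ∘ₗ c.inr) (comp_injective _ _ c.inr_injective hf)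
      = Q.q U j (g ∘ₗ c.inr) (comp_injective _ _ c.inr_injective hg)) :
    Q.q c.po i f hf = Q.q c.po j g hg := by
  have h : Q.fib c f hf hfx = Q.fib c g hg hgx := (hc U).1 <| by
    rw [Q.centralMap_fib, Q.centralMap_fib, hfg]
  exact congrArg Subtype.val (eq_of_heq (Sigma.mk.inj h).2)

/-- Condition (1) of the centrality criterion. -/
def GenFamily.FixesImages (δ : ∀ i, V →ₗ[ZMod p] W i) : Prop :=
  ∀ (i j : ι) (U : Submodule (ZMod p) (W i)) (U' : Submodule (ZMod p) (W j))
    (α : ↥U ≃ₗ[ZMod p] ↥U'), α ∈ Q.mor i j U U' →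
    ∀ (w : ↥V) (hw : δ i w ∈ U), ((α ⟨δ i w, hw⟩ : ↥U') : ↥(W j)) = δ j w

/-- Condition (2) of the centrality criterion. -/
def GenFamily.ExtendsAlong (δ : ∀ i, V →ₗ[ZMod p] W i) : Prop :=
  ∀ (i j : ι) (U : Submodule (ZMod p) (W i)) (U' : Submodule (ZMod p) (W j))
    (α : ↥U ≃ₗ[ZMod p] ↥U'),
    (∀ (w : ↥V) (hw : δ i w ∈ U), ((α ⟨δ i w, hw⟩ : ↥U') : ↥(W j)) = δ j w) →
    ∀ (β : ↥(U ⊔ LinearMap.range (δ i)) ≃ₗ[ZMod p] ↥(U' ⊔ LinearMap.range (δ j))),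
      (∀ (z : ↥(U ⊔ LinearMap.range (δ i))) (u : ↥U), (z : ↥(W i)) = u →
        ((β z : ↥(U' ⊔ LinearMap.range (δ j))) : ↥(W j)) = ((α u : ↥U') : ↥(W j))) →
      (∀ (z : ↥(U ⊔ LinearMap.range (δ i))) (w : ↥V), (z : ↥(W i)) = δ i w →
        ((β z : ↥(U' ⊔ LinearMap.range (δ j))) : ↥(W j)) = δ j w) →
      (α ∈ Q.mor i j U U' ↔
        β ∈ Q.mor i j (U ⊔ LinearMap.range (δ i)) (U' ⊔ LinearMap.range (δ j)))

variable {Q} {δ : ∀ i, V →ₗ[ZMod p] W i}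

theorem GenFamily.FixesImages.apply_eq (h : Q.FixesImages δ) {T : FDVec p} {i j : ι}
    {f : T →ₗ[ZMod p] W i} {hf : Function.Injective f}
    {g : T →ₗ[ZMod p] W j} {hg : Function.Injective g}
    (hfg : Q.q T i f hf = Q.q T j g hg) {t : T} {w : V} (ht : f t = δ i w) :
    g t = δ j w := by
  obtain ⟨α, hα⟩ := exists_equiv_of_range_eq f hf g hg rfl rfl
  have hw : δ i w ∈ LinearMap.range f := ⟨t, ht⟩
  rw [← h i j _ _ α ((Q.mem_mor_iff α f hf g hg rfl hα).2 hfg) w hw,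
    ← hα t (LinearMap.mem_range_self f t)]
  simp only [ht]

theorem GenFamily.FixesImages.carrier_le (h : Q.FixesImages δ) {U : FDVec p}
    {c d : Corr p V U} {i j : ι}
    {f : c.po →ₗ[ZMod p] W i} (hf : Function.Injective f)
    {g : d.po →ₗ[ZMod p] W j} (hg : Function.Injective g)
    (hfδ : f ∘ₗ c.inl = δ i) (hgδ : g ∘ₗ d.inl = δ j)
    (hfg : Q.q U i (f ∘ₗ c.inr) (comp_injective _ _ c.inr_injective hf)
      = Q.q U j (g ∘ₗ d.inr) (comp_injective _ _ d.inr_injective hg)) :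
    c.carrier ≤ d.carrier := by
  rintro ⟨v, u⟩ hvu
  rw [c.mem_carrier_iff f hf, add_eq_zero_iff_eq_neg] at hvu
  rw [d.mem_carrier_iff g hg, add_eq_zero_iff_eq_neg]
  have hu : (f ∘ₗ c.inr) (-u) = δ i v := by
    rw [map_neg, ← hfδ]
    exact hvu.symm
  have := h.apply_eq hfg hu
  rw [map_neg, ← hgδ] at this
  exact this.symm

theorem GenFamily.isCentral_of_conditions (h1 : Q.FixesImages δ) (h2 : Q.ExtendsAlong δ)
    (hδ : ∀ i, Function.Injective (δ i)) (hx : ∀ i, Q.q V i (δ i) (hδ i) = x) :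
    F.IsCentral V x := by
  intro U
  constructor
  · rintro ⟨c, b, hb⟩ ⟨d, b', hb'⟩ hbb'
    obtain ⟨i, f, hf, rfl⟩ := Q.surjective _ b
    obtain ⟨j, g, hg, rfl⟩ := Q.surjective _ b'
    have hcl := comp_injective _ _ c.inl_injective hf
    have hdl := comp_injective _ _ d.inl_injective hg
    have hcr := comp_injective _ _ c.inr_injective hf
    have hdr := comp_injective _ _ d.inr_injective hg
    have hfδ : f ∘ₗ c.inl = δ i := by
      ext v
      refine h1.apply_eq (hf := hδ i) (hg := hcl) ?_ rfl
      rw [hx, Q.natural V c.po c.inl c.inl_injective i f hf hcl, hb]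
    have hgδ : g ∘ₗ d.inl = δ j := by
      ext v
      refine h1.apply_eq (hf := hδ j) (hg := hdl) ?_ rfl
      rw [hx, Q.natural V d.po d.inl d.inl_injective j g hg hdl, hb']
    have hfg : Q.q U i (f ∘ₗ c.inr) hcr = Q.q U j (g ∘ₗ d.inr) hdr := by
      rw [Q.natural U c.po c.inr c.inr_injective i f hf hcr,
        Q.natural U d.po d.inr d.inr_injective j g hg hdr]
      exact hbb'
    obtain rfl : c = d := Corr.ext_carrier <| le_antisymm
      (h1.carrier_le hf hg hfδ hgδ hfg) (h1.carrier_le hg hf hgδ hfδ hfg.symm)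
    obtain ⟨α, hα⟩ := exists_equiv_of_range_eq (f ∘ₗ c.inr) hcr (g ∘ₗ c.inr) hdr rfl rfl
    obtain ⟨β, hβ⟩ := exists_equiv_of_range_eq f hf g hg
      (hfδ ▸ c.range_eq f) (hgδ ▸ c.range_eq g)
    have hαm := (Q.mem_mor_iff α _ hcr _ hdr rfl hα).2 hfg
    have hβm := (h2 i j _ _ α (h1 i j _ _ α hαm) β ?_ ?_).1 hαm
    · have hq := (Q.mem_mor_iff β f hf g hg (hfδ ▸ c.range_eq f) hβ).1 hβm
      exact congrArg (Sigma.mk c) (Subtype.ext hq)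
    · rintro ⟨_, hz⟩ ⟨_, u, rfl⟩ rfl
      exact (hβ _ hz).trans (hα u _).symm
    · rintro ⟨z, hz⟩ w hzw
      obtain rfl : z = f (c.inl w) := hzw.trans (LinearMap.congr_fun hfδ w).symm
      exact (hβ _ hz).trans (LinearMap.congr_fun hgδ w)
  · intro y
    obtain ⟨i, ε, hε, rfl⟩ := Q.surjective _ y
    obtain ⟨f, hf, hfl, hfr⟩ := exists_kerCorr_lift (δ i) ε (hδ i) hε
    exact ⟨Q.fib _ f hf ((Q.q_congr hfl _ (hδ i)).trans (hx i)),
      (Q.centralMap_fib _ f hf _).trans (Q.q_congr hfr _ hε)⟩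

theorem GenFamily.fixesImages_of_isCentral (hc : F.IsCentral V x)
    (hδ : ∀ i, Function.Injective (δ i)) (hx : ∀ i, Q.q V i (δ i) (hδ i) = x) :
    Q.FixesImages δ := by
  intro i j U U' α hα w hw
  have hUα : Function.Injective (U'.subtype ∘ₗ α.toLinearMap) :=
    comp_injective _ _ α.injective U'.injective_subtype
  obtain ⟨f, hf, hfl, hfr⟩ :=
    exists_kerCorr_lift (U := subFD U) (δ i) U.subtype (hδ i) U.injective_subtype
  obtain ⟨g, hg, hgl, hgr⟩ :=
    exists_kerCorr_lift (U := subFD U) (δ j) (U'.subtype ∘ₗ α.toLinearMap) (hδ j) hUα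
  have hq := (Q.mem_mor_iff (T := subFD U) α U.subtype U.injective_subtype
    (U'.subtype ∘ₗ α.toLinearMap) hUα U.range_subtype (fun _ _ => rfl)).1 hα
  have hcd := Q.eq_carrier_of_isCentral hc f hf g hg
    ((Q.q_congr hfl _ (hδ i)).trans (hx i)) ((Q.q_congr hgl _ (hδ j)).trans (hx j))
    ((Q.q_congr hfr _ U.injective_subtype).trans (hq.trans (Q.q_congr hgr _ hUα).symm))
  have hmem : ((w, -⟨δ i w, hw⟩) : ↥V × ↥U) ∈ LinearMap.ker ((δ i).coprod U.subtype) := by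
    simp
  have hmem' : ((w, -⟨δ i w, hw⟩) : ↥V × ↥U)
      ∈ LinearMap.ker ((δ j).coprod (U'.subtype ∘ₗ α.toLinearMap)) :=
    (congrArg Corr.carrier hcd).le hmem
  rw [LinearMap.mem_ker, LinearMap.coprod_apply, map_neg, ← sub_eq_add_neg, sub_eq_zero]
    at hmem'
  exact hmem'.symm

theorem GenFamily.extendsAlong_of_isCentral (hc : F.IsCentral V x)
    (hδ : ∀ i, Function.Injective (δ i)) (hx : ∀ i, Q.q V i (δ i) (hδ i) = x) :
    Q.ExtendsAlong δ := by
  intro i j U U' α _ β hβα hβδ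
  have hUα : Function.Injective (U'.subtype ∘ₗ α.toLinearMap) :=
    comp_injective _ _ α.injective U'.injective_subtype
  have hαiff := Q.mem_mor_iff (T := subFD U) α U.subtype U.injective_subtype
    (U'.subtype ∘ₗ α.toLinearMap) hUα U.range_subtype (fun _ _ => rfl)
  obtain ⟨f, hf, hfl, hfr⟩ :=
    exists_kerCorr_lift (U := subFD U) (δ i) U.subtype (hδ i) U.injective_subtype
  generalize kerCorr (U := subFD U) (δ i) U.subtype (hδ i) U.injective_subtype = c at *
  have hrange : LinearMap.range f = U ⊔ LinearMap.range (δ i) := by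
    rw [c.range_eq f, hfl, hfr, U.range_subtype]
  let f' := f.codRestrict (U ⊔ LinearMap.range (δ i))
    (fun z => hrange ▸ LinearMap.mem_range_self f z)
  let g : c.po →ₗ[ZMod p] W j :=
    (U' ⊔ LinearMap.range (δ j)).subtype ∘ₗ β.toLinearMap ∘ₗ f'
  have hg : Function.Injective g := fun a b hab =>
    hf (congrArg Subtype.val (β.injective (Subtype.ext hab)))
  have hgl : g ∘ₗ c.inl = δ j := by
    ext w
    exact hβδ (f' (c.inl w)) w (LinearMap.congr_fun hfl w)
  have hgr : g ∘ₗ c.inr = U'.subtype ∘ₗ α.toLinearMap := by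
    ext u
    exact hβα (f' (c.inr u)) u (LinearMap.congr_fun hfr u)
  rw [hαiff, Q.mem_mor_iff β f hf g hg hrange (fun _ _ => rfl)]
  have hfr' := Q.q_congr hfr (comp_injective _ _ c.inr_injective hf) U.injective_subtype
  have hgr' := Q.q_congr hgr (comp_injective _ _ c.inr_injective hg) hUα
  constructor
  · intro hq
    exact Q.q_eq_of_isCentral hc f hf g hg ((Q.q_congr hfl _ (hδ i)).trans (hx i))
      ((Q.q_congr hgl _ (hδ j)).trans (hx j)) (hfr'.trans (hq.trans hgr'.symm))
  · intro hq
    rw [← hfr', ← hgr', Q.natural _ _ c.inr c.inr_injective i f hf,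
      Q.natural _ _ c.inr c.inr_injective j g hg, hq]

end Central

/-- **Statement 17.** Let `F` have a minimal generating family `((W_i), q)`, let
`x ∈ F(V)` and let `δ_i : V → W_i` be injective with `x = δ_i^* φ_i`; `V_i := δ_i(V)`.
Then `(V,x)` is central iff:
(1) every `α ∈ 𝒢_{(F,q)}(U ⊆ W_i, U' ⊆ W_j)` satisfies `α(v) = δ_j((δ_i|^{V_i})⁻¹ v)`
for `v ∈ U ∩ V_i`; and
(2) for every isomorphism `α : U ≃ U'` satisfying that compatibility, `α ∈ 𝒢_{(F,q)}`
iff `ᾱ ∈ 𝒢_{(F,q)}(U + V_i, U' + V_j)`, where `ᾱ` is the linear isomorphism sending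
`u ∈ U` to `α(u)` and `v = δ_i w ∈ V_i` to `δ_j w`. -/
theorem statement_17 {p : ℕ} [Fact p.Prime] {ι : Type} (W : ι → FDVec p)
    (F : VIPresheaf p) (Q : GenFamily W F) (hmin : Q.Minimal)
    (V : FDVec p) (x : F.obj V)
    (δ : ∀ i, V →ₗ[ZMod p] W i) (hδ : ∀ i, Function.Injective (δ i))
    (hxδ : ∀ i, x = F.map (δ i) (hδ i) (Q.phi i)) :
    F.IsCentral V x ↔
      ((∀ (i j : ι) (U : Submodule (ZMod p) (W i)) (U' : Submodule (ZMod p) (W j))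
          (α : ↥U ≃ₗ[ZMod p] ↥U'), α ∈ Q.mor i j U U' →
          ∀ (w : ↥V) (hw : δ i w ∈ U), ((α ⟨δ i w, hw⟩ : ↥U') : ↥(W j)) = δ j w) ∧
       (∀ (i j : ι) (U : Submodule (ZMod p) (W i)) (U' : Submodule (ZMod p) (W j))
          (α : ↥U ≃ₗ[ZMod p] ↥U'),
          (∀ (w : ↥V) (hw : δ i w ∈ U), ((α ⟨δ i w, hw⟩ : ↥U') : ↥(W j)) = δ j w) →
          ∀ (β : ↥(U ⊔ LinearMap.range (δ i)) ≃ₗ[ZMod p] ↥(U' ⊔ LinearMap.range (δ j))),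
            (∀ (z : ↥(U ⊔ LinearMap.range (δ i))) (u : ↥U), (z : ↥(W i)) = u →
              ((β z : ↥(U' ⊔ LinearMap.range (δ j))) : ↥(W j)) = ((α u : ↥U') : ↥(W j))) →
            (∀ (z : ↥(U ⊔ LinearMap.range (δ i))) (w : ↥V), (z : ↥(W i)) = δ i w →
              ((β z : ↥(U' ⊔ LinearMap.range (δ j))) : ↥(W j)) = δ j w) →
            (α ∈ Q.mor i j U U' ↔
              β ∈ Q.mor i j (U ⊔ LinearMap.range (δ i)) (U' ⊔ LinearMap.range (δ j))))) := by
  have hx : ∀ i, Q.q V i (δ i) (hδ i) = x := fun i =>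
    (Q.q_eq_map_phi (δ i) (hδ i)).trans (hxδ i).symm
  exact ⟨fun hc => ⟨GenFamily.fixesImages_of_isCentral hc hδ hx,
    GenFamily.extendsAlong_of_isCentral hc hδ hx⟩,
    fun h => GenFamily.isCentral_of_conditions h.1 h.2 hδ hx⟩

end Paper
end
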